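/- Assume conditions (A), (S), (S)₁ and (K). Then there exist constants C > 0 and c > 0 such that for every r ≥ 0, every ω ∈ S^{n−1}, and every differentiable function û : [0,∞) → ℂᵐ satisfying A⁰û′(t) + i r A(ω) û(t) + L û(t) = 0 for all t ≥ 0, one has |û(t)| ≤ C e^{−c η(r) t} |û(0)| for all t ≥ 0. -/

import Mathlib

open Matrix BigOperators Finset

noncomputable section

/-- Complexification of a real matrix. -/
def cmap {a b : ℕ} (X : Matrix (Fin a) (Fin b) ℝ) : Matrix (Fin a) (Fin b) ℂ :=
  X.map (fun x => (x : ℂ))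

/-- Real part of the standard Hermitian inner product `⟨x, y⟩ = ∑ xᵢ conj yᵢ` on `ℂᵐ`. -/
def reIP {m : ℕ} (x y : Fin m → ℂ) : ℝ := (∑ i, x i * (starRingEnd ℂ) (y i)).re

/-- Symmetric part `X₁ = (X + Xᵀ)/2` of a real square matrix. -/
def symP {m : ℕ} (X : Matrix (Fin m) (Fin m) ℝ) : Matrix (Fin m) (Fin m) ℝ :=
  (2⁻¹ : ℝ) • (X + Xᵀ)

/-- Skew-symmetric part `X₂ = (X − Xᵀ)/2` of a real square matrix. -/
def skewP {m : ℕ} (X : Matrix (Fin m) (Fin m) ℝ) : Matrix (Fin m) (Fin m) ℝ :=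
  (2⁻¹ : ℝ) • (X - Xᵀ)

/-- Kernel of (the complexification of) a real matrix, as a subset of `ℂᵐ`. -/
def kerC {m : ℕ} (L : Matrix (Fin m) (Fin m) ℝ) : Set (Fin m → ℂ) :=
  {z | (cmap L).mulVec z = 0}

/-- Euclidean norm on `ℂᵐ`. -/
def cnrm {m : ℕ} (z : Fin m → ℂ) : ℝ := Real.sqrt (∑ i, Complex.normSq (z i))

/-!
Regard `ℂᵐ` as a real inner product space and put `⟪x, y⟫ = Re ⟨x, y⟩`. The quadratic form
`⟪A⁰u, u⟫ + α/(1+r²) ⟪SA⁰u, u⟫ + δr/(1+r²)² ⟪-iKA⁰u, u⟫` is comparable to `|u|²` for small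
`α` and `δ`, and along solutions it dissipates at the rate `r²/(1+r²)²`: the forms of `L` and
`SL + L` control `u` away from `Ker L`, and the form of `KA` is positive on `Ker L`.

The remaining terms `⟪iSAu, u⟫` and `⟪-iKLu, u⟫` are nonnegative on the zero sets of the forms
`⟪Lu, u⟫` and `⟪(SL + L)u, u⟫` respectively. Such a term is bounded below by
`-M √(form) |u|`, and Young's inequality absorbs it once `δ ≪ α` and `α² ≪ δ`. Compactness of the
unit sphere makes the constants uniform in `ω`, and Grönwall's inequality concludes.
-/

open scoped InnerProductSpace

lemma exists_pos_le_add_mul_of_pos_on_zeros {X : Type*} [TopologicalSpace X] [CompactSpace X]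
    {f g : X → ℝ} (hf : Continuous f) (hg : Continuous g) (hg_nonneg : ∀ x, 0 ≤ g x)
    (hpos : ∀ x, g x = 0 → 0 < f x) :
    ∃ c > 0, ∃ N ≥ 0, ∀ x, c ≤ f x + N * g x := by
  rcases isEmpty_or_nonempty X with _ | _
  · exact ⟨1, one_pos, 0, le_rfl, isEmptyElim⟩
  have hcover : Set.univ ⊆ ⋃ N : ℕ, {x | 0 < f x + N * g x} := by
    intro x _
    rw [Set.mem_iUnion]
    rcases (hg_nonneg x).eq_or_lt with h | h
    · exact ⟨0, by simpa using hpos x h.symm⟩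
    · obtain ⟨N, hN⟩ := exists_nat_gt (-f x / g x)
      exact ⟨N, neg_lt_iff_pos_add'.1 ((div_lt_iff₀ h).1 hN)⟩
  have hmono : Monotone fun N : ℕ => {x | 0 < f x + N * g x} := fun _ _ hab x hx =>
    lt_of_lt_of_le (Set.mem_ofPred.1 hx) (by gcongr; exact hg_nonneg x)
  obtain ⟨N, hN⟩ := isCompact_univ.elim_directed_cover _
    (fun N => isOpen_lt continuous_const (by fun_prop)) hcover hmono.directed_le
  obtain ⟨x₀, hx₀, hmin⟩ := isCompact_univ.exists_isMinOn Set.univ_nonempty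
    (f := fun x => f x + N * g x) (by fun_prop)
  exact ⟨_, hN hx₀, N, N.cast_nonneg, fun x => hmin (Set.mem_univ x)⟩

section QuadraticForms

variable {E : Type*} [NormedAddCommGroup E] [InnerProductSpace ℝ E]

lemma abs_inner_apply_self_le (T : E →L[ℝ] E) (x : E) : |⟪T x, x⟫_ℝ| ≤ ‖T‖ * ‖x‖ ^ 2 := by
  rw [pow_two, ← mul_assoc]
  exact (abs_real_inner_le_norm _ _).trans (by gcongr; exact T.le_opNorm x)

lemma inner_apply_self_eq_zero_iff_of_isPositive {P : E →L[ℝ] E} (hP : P.IsPositive) {x : E} :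
    ⟪P x, x⟫_ℝ = 0 ↔ P x = 0 := by
  have hB : ((innerₗ E).comp (P : E →ₗ[ℝ] E)).IsSymm :=
    ⟨fun x y => by simpa [real_inner_comm] using hP.isSymmetric x y⟩
  refine (LinearMap.BilinForm.apply_apply_same_eq_zero_iff _ hP.inner_nonneg_left hB).trans ?_
  exact ⟨fun h => inner_self_eq_zero (𝕜 := ℝ).1 (LinearMap.congr_fun h (P x)), fun h => by
    simp [LinearMap.mem_ker, h]⟩

variable [FiniteDimensional ℝ E] {W : Type*} [TopologicalSpace W] [CompactSpace W]

lemma exists_pos_mul_sq_norm_le_inner_add {f : W → E →L[ℝ] E} {q : E →L[ℝ] E}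
    (hf : Continuous f) (hq : ∀ x, 0 ≤ ⟪q x, x⟫_ℝ)
    (hpos : ∀ ω x, x ≠ 0 → ⟪q x, x⟫_ℝ = 0 → 0 < ⟪f ω x, x⟫_ℝ) :
    ∃ c > 0, ∃ N ≥ 0, ∀ ω x, c * ‖x‖ ^ 2 ≤ ⟪f ω x, x⟫_ℝ + N * ⟪q x, x⟫_ℝ := by
  obtain ⟨c, hc, N, hN, h⟩ := exists_pos_le_add_mul_of_pos_on_zeros
    (X := W × Metric.sphere (0 : E) 1)
    (f := fun p => ⟪f p.1 p.2, (p.2 : E)⟫_ℝ) (g := fun p => ⟪q p.2, (p.2 : E)⟫_ℝ)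
    (by fun_prop) (by fun_prop) (fun p => hq p.2)
    (fun p => hpos p.1 p.2 (ne_zero_of_mem_unit_sphere p.2))
  refine ⟨c, hc, N, hN, fun ω x => ?_⟩
  rcases eq_or_ne x 0 with rfl | hx
  · simp
  have hx' : 0 < ‖x‖ := norm_pos_iff.2 hx
  have hunit := h (ω, ⟨‖x‖⁻¹ • x, by simp [norm_smul, hx'.ne']⟩)
  simp only [map_smul, real_inner_smul_left, real_inner_smul_right] at hunit
  calc c * ‖x‖ ^ 2 ≤ _ := mul_le_mul_of_nonneg_right hunit (sq_nonneg ‖x‖)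
    _ = ⟪f ω x, x⟫_ℝ + N * ⟪q x, x⟫_ℝ := by field_simp

lemma exists_pos_mul_sq_norm_le_inner {a : E →L[ℝ] E} (ha : ∀ x, x ≠ 0 → 0 < ⟪a x, x⟫_ℝ) :
    ∃ c > 0, ∀ x, c * ‖x‖ ^ 2 ≤ ⟪a x, x⟫_ℝ := by
  obtain ⟨c, hc, _, -, h⟩ := exists_pos_mul_sq_norm_le_inner_add (W := Unit) (f := fun _ => a)
    (q := 0) continuous_const (by simp) (fun _ x hx _ => ha x hx)
  exact ⟨c, hc, by simpa using h ()⟩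

lemma exists_norm_sub_le_mul_sqrt_inner_of_isPositive {P : E →L[ℝ] E} (hP : P.IsPositive) :
    ∃ C, ∀ x, ∃ v, P v = 0 ∧ ‖v‖ ≤ ‖x‖ ∧ ‖x - v‖ ≤ C * √⟪P x, x⟫_ℝ := by
  set N : Submodule ℝ E := LinearMap.ker (P : E →ₗ[ℝ] E)
  obtain ⟨c, hc, M, -, hcoer⟩ := exists_pos_mul_sq_norm_le_inner_add (W := Unit)
    (f := fun _ => N.starProjection) (q := P) continuous_const hP.inner_nonneg_left
    fun _ x hx hPx => by
      have hxN : x ∈ N := (inner_apply_self_eq_zero_iff_of_isPositive hP).1 hPx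
      rw [Submodule.starProjection_eq_self_iff.2 hxN]
      exact real_inner_self_pos.2 hx
  refine ⟨√(M / c), fun x => ?_⟩
  set v := N.starProjection x
  have hv : v ∈ N := N.starProjection_apply_mem x
  have hPv : P v = 0 := hv
  have hproj : N.starProjection (x - v) = 0 := by
    rw [map_sub, Submodule.starProjection_eq_self_iff.2 hv, sub_self]
  have hP_sub : ⟪P (x - v), x - v⟫_ℝ = ⟪P x, x⟫_ℝ := by
    rw [map_sub, hPv, sub_zero, inner_sub_right, hP.inner_left_eq_inner_right x v, hPv,
      inner_zero_right, sub_zero]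
  refine ⟨v, hPv, N.norm_starProjection_apply_le x, ?_⟩
  have hsub := hcoer () (x - v)
  rw [hproj, inner_zero_left, zero_add, hP_sub] at hsub
  rw [← Real.sqrt_mul' _ (hP.inner_nonneg_left x)]
  refine Real.le_sqrt_of_sq_le ?_
  rwa [div_mul_eq_mul_div, le_div_iff₀' hc]

lemma exists_norm_sub_le_mul_sqrt_inner {T : E →L[ℝ] E} (hT : ∀ x, 0 ≤ ⟪T x, x⟫_ℝ) :
    ∃ C, ∀ x, ∃ v, ⟪T v, v⟫_ℝ = 0 ∧ ‖v‖ ≤ ‖x‖ ∧ ‖x - v‖ ≤ C * √⟪T x, x⟫_ℝ := by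
  have hP (x : E) : ⟪(T + T.adjoint) x, x⟫_ℝ = 2 * ⟪T x, x⟫_ℝ := by
    simp [inner_add_left, ContinuousLinearMap.adjoint_inner_left, real_inner_comm, two_mul]
  have hP_pos : (T + T.adjoint).IsPositive := by
    refine ⟨fun x y => ?_, fun x => ?_⟩
    · simp [inner_add_left, inner_add_right, ContinuousLinearMap.adjoint_inner_left,
        ContinuousLinearMap.adjoint_inner_right, add_comm]
    · exact (mul_nonneg zero_le_two (hT x)).trans_eq (hP x).symm
  obtain ⟨C, h⟩ := exists_norm_sub_le_mul_sqrt_inner_of_isPositive hP_pos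
  refine ⟨C * √2, fun x => ?_⟩
  obtain ⟨v, hv, hvx, hxv⟩ := h x
  have hTv := hP v
  rw [hv, inner_zero_left] at hTv
  rw [hP, Real.sqrt_mul zero_le_two, ← mul_assoc] at hxv
  exact ⟨v, by linarith, hvx, hxv⟩

lemma exists_neg_mul_sqrt_mul_norm_le_inner {f : W → E →L[ℝ] E} {T : E →L[ℝ] E}
    (hf : Continuous f) (hT : ∀ x, 0 ≤ ⟪T x, x⟫_ℝ)
    (hzero : ∀ ω x, ⟪T x, x⟫_ℝ = 0 → 0 ≤ ⟪f ω x, x⟫_ℝ) :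
    ∃ M, ∀ ω x, -(M * √⟪T x, x⟫_ℝ * ‖x‖) ≤ ⟪f ω x, x⟫_ℝ := by
  obtain ⟨C, hnear⟩ := exists_norm_sub_le_mul_sqrt_inner hT
  obtain ⟨B, hB⟩ := isCompact_univ.exists_bound_of_continuousOn hf.continuousOn
  refine ⟨2 * |B| * C, fun ω x => ?_⟩
  obtain ⟨v, hv_zero, hv_le, hxv⟩ := hnear x
  have hbound (y z : E) : |⟪f ω y, z⟫_ℝ| ≤ |B| * ‖y‖ * ‖z‖ := by
    refine (abs_real_inner_le_norm _ _).trans ?_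
    gcongr
    exact (f ω).le_of_opNorm_le ((hB ω (Set.mem_univ ω)).trans (le_abs_self B)) y
  have hsplit : ⟪f ω x, x⟫_ℝ = ⟪f ω v, v⟫_ℝ + ⟪f ω v, x - v⟫_ℝ + ⟪f ω (x - v), x⟫_ℝ := by
    simp only [map_sub, inner_sub_left, inner_sub_right]
    ring
  have hcross₁ : |⟪f ω v, x - v⟫_ℝ| ≤ |B| * ‖x‖ * (C * √⟪T x, x⟫_ℝ) :=
    (hbound _ _).trans (by gcongr)
  have hcross₂ : |⟪f ω (x - v), x⟫_ℝ| ≤ |B| * (C * √⟪T x, x⟫_ℝ) * ‖x‖ :=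
    (hbound _ _).trans (by gcongr)
  linarith [neg_abs_le ⟪f ω v, x - v⟫_ℝ, neg_abs_le ⟪f ω (x - v), x⟫_ℝ, hzero ω v hv_zero]

end QuadraticForms

section LyapunovMultiplier

variable {ρ σ α δ c U : ℝ}

lemma neg_le_mul_of_neg_mul_sqrt_mul_le {M X v : ℝ} (hρ : 0 ≤ ρ) (hα : 0 ≤ α) (hδc : 0 < δ * c)
    (hX : 0 ≤ X) (hM : 2 * α ^ 2 * M ^ 2 ≤ δ * c) (hv : -(M * √X * U) ≤ v) :
    -(δ * c / 4 * (ρ * U) ^ 2 + X / 2) ≤ α * (ρ * v) := by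
  have hyoung : 2 * (ρ * U) * (α * M * √X) ≤
      δ * c / 2 * (ρ * U) ^ 2 + (δ * c / 2)⁻¹ * (α * M * √X) ^ 2 :=
    two_mul_le_add_mul_sq (half_pos hδc)
  have habsorb : (δ * c / 2)⁻¹ * (α * M * √X) ^ 2 ≤ X := by
    rw [inv_mul_le_iff₀ (half_pos hδc), mul_pow, Real.sq_sqrt hX]
    gcongr
    linarith
  have := mul_le_mul_of_nonneg_left hv (mul_nonneg hα hρ)
  linarith

lemma mul_sq_sub_le_mul_add_of_neg_mul_sqrt_mul_le {N M Y v w : ℝ} (hρ : 0 ≤ ρ) (hσ : 0 ≤ σ)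
    (hσ_le : σ ≤ 1) (hρσ : ρ ^ 2 ≤ σ) (hδ : 0 ≤ δ) (hc : 0 < c) (hN : 0 ≤ N) (hY : 0 ≤ Y)
    (hM : δ * (N * c + M ^ 2) ≤ α * c) (hv : -(M * √Y * U) ≤ v) (hw : c * U ^ 2 ≤ w + N * Y) :
    3 / 4 * (δ * c) * (ρ * U) ^ 2 - α * σ * Y ≤ δ * (ρ * (ρ * w + σ * v)) := by
  have hyoung : 2 * (ρ * U) * (σ * M * √Y) ≤
      c / 2 * (ρ * U) ^ 2 + (c / 2)⁻¹ * (σ * M * √Y) ^ 2 :=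
    two_mul_le_add_mul_sq (half_pos hc)
  have hσsq : σ ^ 2 ≤ σ := pow_le_of_le_one hσ hσ_le two_ne_zero
  have habsorb : δ * (N * ρ ^ 2 + M ^ 2 * σ ^ 2 / c) ≤ α * σ :=
    calc δ * (N * ρ ^ 2 + M ^ 2 * σ ^ 2 / c) ≤ δ * (N * σ + M ^ 2 * σ / c) := by gcongr
      _ = δ * (N * c + M ^ 2) / c * σ := by field_simp
      _ ≤ α * σ := mul_le_mul_of_nonneg_right ((div_le_iff₀ hc).2 hM) hσ
  have hkey : c * (ρ * U) ^ 2 - N * ρ ^ 2 * Y - (c / 4 * (ρ * U) ^ 2 + M ^ 2 * σ ^ 2 / c * Y) ≤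
      ρ * (ρ * w + σ * v) := by
    have hsq : (c / 2)⁻¹ * (σ * M * √Y) ^ 2 = 2 * (M ^ 2 * σ ^ 2 / c * Y) := by
      rw [mul_pow, Real.sq_sqrt hY]
      field_simp
    have hw' := mul_le_mul_of_nonneg_left hw (sq_nonneg ρ)
    have hv' := mul_le_mul_of_nonneg_left hv (mul_nonneg hρ hσ)
    linarith
  have := mul_le_mul_of_nonneg_left hkey hδ
  have := mul_le_mul_of_nonneg_right habsorb hY
  linarith

lemma exists_lyapunov_weights {ε N : ℝ} (hc : 0 < c) (hε : 0 < ε) (hN : 0 ≤ N) (Ms Mk : ℝ) :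
    ∃ α > 0, ∃ δ > 0, α ≤ ε ∧ δ ≤ ε ∧
      2 * α ^ 2 * Ms ^ 2 ≤ δ * c ∧ δ * (N * c + Mk ^ 2) ≤ α * c := by
  have hD : 0 < c + N * c + Mk ^ 2 := by positivity
  set θ := c / (c + N * c + Mk ^ 2) with hθ
  have hθ_pos : 0 < θ := by positivity
  have hθ_le : θ ≤ 1 := by
    rw [hθ, div_le_one hD]
    linarith [sq_nonneg Mk, mul_nonneg hN hc.le]
  set α := min ε (θ * c / (2 * Ms ^ 2 + 1))
  have hα : 0 < α := by positivity
  have hα_le : α * (2 * Ms ^ 2 + 1) ≤ θ * c := (le_div_iff₀ (by positivity)).1 (min_le_right _ _)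
  refine ⟨α, hα, θ * α, by positivity, min_le_left _ _,
    (mul_le_of_le_one_left hα.le hθ_le).trans (min_le_left _ _), ?_, ?_⟩
  · calc 2 * α ^ 2 * Ms ^ 2 ≤ α * (α * (2 * Ms ^ 2 + 1)) := by linarith [sq_nonneg α]
      _ ≤ α * (θ * c) := by gcongr
      _ = θ * α * c := by ring
  · have hθD : θ * (c + N * c + Mk ^ 2) = c := div_mul_cancel₀ _ hD.ne'
    calc θ * α * (N * c + Mk ^ 2) ≤ α * (θ * (c + N * c + Mk ^ 2)) := by
          linarith [mul_pos (mul_pos hθ_pos hα) hc]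
      _ = α * c := by rw [hθD]

variable {E : Type*} [NormedAddCommGroup E] [InnerProductSpace ℝ E]

/-- The multiplier `1 + α/(1+r²) S + δr/(1+r²)² K`, which turns the energy `⟪A⁰u, u⟫` of
`A⁰u' + rBu + Lu = 0` into a Lyapunov functional for every frequency `r`. The powers of `1 + r²`
are those that let the term `K` be absorbed by the term `S`, and the term `S` by `L`, with weights
`α` and `δ` independent of `r`. -/
def lyapunovMultiplier (s k : E →L[ℝ] E) (α δ r : ℝ) : E →L[ℝ] E :=
  1 + (α / (1 + r ^ 2)) • s + (δ * r / (1 + r ^ 2) ^ 2) • k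

lemma inner_lyapunovMultiplier (s k : E →L[ℝ] E) (α δ r : ℝ) (x y : E) :
    ⟪lyapunovMultiplier s k α δ r x, y⟫_ℝ =
      ⟪x, y⟫_ℝ + α / (1 + r ^ 2) * ⟪s x, y⟫_ℝ + δ * r / (1 + r ^ 2) ^ 2 * ⟪k x, y⟫_ℝ := by
  simp [lyapunovMultiplier, inner_add_left, real_inner_smul_left]

lemma isSymmetric_lyapunovMultiplier_mul {a s k : E →L[ℝ] E}
    (ha : (a : E →ₗ[ℝ] E).IsSymmetric)
    (hsa : ((s * a : E →L[ℝ] E) : E →ₗ[ℝ] E).IsSymmetric)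
    (hka : ((k * a : E →L[ℝ] E) : E →ₗ[ℝ] E).IsSymmetric) (α δ r : ℝ) :
    ((lyapunovMultiplier s k α δ r * a : E →L[ℝ] E) : E →ₗ[ℝ] E).IsSymmetric := by
  convert (ha.add (hsa.smul (c := α / (1 + r ^ 2)) rfl)).add
    (hka.smul (c := δ * r / (1 + r ^ 2) ^ 2) rfl) using 1
  ext; simp [lyapunovMultiplier]

lemma abs_inner_lyapunovMultiplier_mul_sub_le (a s k : E →L[ℝ] E) {ε r : ℝ} (hα : 0 ≤ α)
    (hδ : 0 ≤ δ) (hαε : α ≤ ε) (hδε : δ ≤ ε) (hr : 0 ≤ r) (x : E) :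
    |⟪(lyapunovMultiplier s k α δ r * a) x, x⟫_ℝ - ⟪a x, x⟫_ℝ| ≤
      ε * (‖s * a‖ + ‖k * a‖) * ‖x‖ ^ 2 := by
  have hα' : |α / (1 + r ^ 2)| ≤ ε := by
    rw [abs_of_nonneg (by positivity)]
    exact (div_le_self hα (by nlinarith)).trans hαε
  have hδ' : |δ * r / (1 + r ^ 2) ^ 2| ≤ ε := by
    rw [abs_of_nonneg (by positivity), mul_div_assoc]
    refine (mul_le_of_le_one_right hδ ?_).trans hδε
    rw [div_le_one (by positivity)]
    nlinarith [sq_nonneg (r - 1)]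
  calc |⟪(lyapunovMultiplier s k α δ r * a) x, x⟫_ℝ - ⟪a x, x⟫_ℝ|
      = |α / (1 + r ^ 2) * ⟪(s * a) x, x⟫_ℝ + δ * r / (1 + r ^ 2) ^ 2 * ⟪(k * a) x, x⟫_ℝ| := by
        congr 1
        simp only [mul_apply_eq_comp, inner_lyapunovMultiplier]
        ring
    _ ≤ ε * (‖s * a‖ * ‖x‖ ^ 2) + ε * (‖k * a‖ * ‖x‖ ^ 2) := by
        refine (abs_add_le _ _).trans ?_
        rw [abs_mul, abs_mul]
        gcongr
        · exact hα.trans hαε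
        · exact abs_inner_apply_self_le _ x
        · exact hα.trans hαε
        · exact abs_inner_apply_self_le _ x
    _ = ε * (‖s * a‖ + ‖k * a‖) * ‖x‖ ^ 2 := by ring

lemma mul_sq_norm_le_inner_lyapunovMultiplier {b k l s : E →L[ℝ] E} {N Ms Mk r : ℝ} {x : E}
    (hr : 0 ≤ r) (hα : 0 ≤ α) (hα_le : α ≤ 1 / 2) (hδ : 0 < δ) (hc : 0 < c) (hN : 0 ≤ N)
    (hMs : 2 * α ^ 2 * Ms ^ 2 ≤ δ * c) (hMk : δ * (N * c + Mk ^ 2) ≤ α * c)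
    (hb : ⟪b x, x⟫_ℝ = 0) (hl : 0 ≤ ⟪l x, x⟫_ℝ) (hsl : 0 ≤ ⟪(s * l + l) x, x⟫_ℝ)
    (hsb : -(Ms * √⟪l x, x⟫_ℝ * ‖x‖) ≤ ⟪(s * b) x, x⟫_ℝ)
    (hkl : -(Mk * √⟪(s * l + l) x, x⟫_ℝ * ‖x‖) ≤ ⟪(k * l) x, x⟫_ℝ)
    (hkb : c * ‖x‖ ^ 2 ≤ ⟪(k * b) x, x⟫_ℝ + N * ⟪(s * l + l) x, x⟫_ℝ) :
    δ * c / 2 * (r / (1 + r ^ 2)) ^ 2 * ‖x‖ ^ 2 ≤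
      ⟪lyapunovMultiplier s k α δ r (r • b x + l x), x⟫_ℝ := by
  set ρ := r / (1 + r ^ 2) with hρ_def
  set σ := 1 / (1 + r ^ 2) with hσ_def
  have hρ : 0 ≤ ρ := by positivity
  have hσ : 0 ≤ σ := by positivity
  have hσ_le : σ ≤ 1 := (div_le_one (by positivity)).2 (by nlinarith)
  have hρσ : ρ ^ 2 ≤ σ := by
    rw [hρ_def, hσ_def, div_pow, div_le_div_iff₀ (by positivity) (by positivity)]
    nlinarith [sq_nonneg r]
  have hexpand : ⟪lyapunovMultiplier s k α δ r (r • b x + l x), x⟫_ℝ =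
      ⟪l x, x⟫_ℝ + α * (ρ * ⟪(s * b) x, x⟫_ℝ) + α * σ * ⟪(s * l) x, x⟫_ℝ +
        δ * (ρ * (ρ * ⟪(k * b) x, x⟫_ℝ + σ * ⟪(k * l) x, x⟫_ℝ)) := by
    simp only [inner_lyapunovMultiplier, map_add, map_smul, inner_add_left, real_inner_smul_left,
      hb, mul_apply_eq_comp, hρ_def, hσ_def]
    field_simp
    ring
  have hs_part := neg_le_mul_of_neg_mul_sqrt_mul_le hρ hα (mul_pos hδ hc) hl hMs hsb
  have hk_part := mul_sq_sub_le_mul_add_of_neg_mul_sqrt_mul_le hρ hσ hσ_le hρσ hδ.le hc hN hsl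
    hMk hkl hkb
  have hl_part : α * σ * ⟪l x, x⟫_ℝ ≤ 1 / 2 * ⟪l x, x⟫_ℝ := by
    gcongr
    exact (mul_le_of_le_one_right hα hσ_le).trans hα_le
  have hsl_eq : ⟪(s * l + l) x, x⟫_ℝ = ⟪(s * l) x, x⟫_ℝ + ⟪l x, x⟫_ℝ := inner_add_left _ _ _
  rw [hsl_eq] at hk_part
  rw [hexpand]
  linarith

end LyapunovMultiplier

section Decay

variable {E : Type*} [NormedAddCommGroup E] [InnerProductSpace ℝ E]

lemma le_mul_exp_of_hasDerivWithinAt_le {f f' : ℝ → ℝ} {κ : ℝ}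
    (hf : ∀ t, 0 ≤ t → HasDerivWithinAt f (f' t) (Set.Ici 0) t)
    (hf' : ∀ t, 0 ≤ t → f' t ≤ κ * f t) {t : ℝ} (ht : 0 ≤ t) :
    f t ≤ f 0 * Real.exp (κ * t) := by
  have := le_gronwallBound_of_liminf_deriv_right_le (f := f) (f' := f') (δ := f 0) (K := κ)
    (ε := 0) (a := 0) (b := t)
    (fun x hx => ((hf x hx.1).continuousWithinAt).mono Set.Icc_subset_Ici_self)
    (fun x hx _ hr => ((hf x hx.1).mono (Set.Ici_subset_Ici.2 hx.1)).liminf_right_slope_le hr)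
    le_rfl (fun x hx => by simpa using hf' x hx.1) t ⟨ht, le_rfl⟩
  simpa [gronwallBound_ε0] using this

lemma norm_le_sqrt_mul_exp_of_isSymmetric {P : E →L[ℝ] E} {c₁ c₂ κ : ℝ}
    (hP : (P : E →ₗ[ℝ] E).IsSymmetric) (hc₁ : 0 < c₁) (hc₂ : 0 < c₂) (hκ : 0 ≤ κ)
    (hlower : ∀ x, c₁ * ‖x‖ ^ 2 ≤ ⟪P x, x⟫_ℝ) (hupper : ∀ x, ⟪P x, x⟫_ℝ ≤ c₂ * ‖x‖ ^ 2)
    {u u' : ℝ → E} (hu : ∀ t, 0 ≤ t → HasDerivWithinAt u (u' t) (Set.Ici 0) t)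
    (hdiss : ∀ t, 0 ≤ t → ⟪P (u' t), u t⟫_ℝ ≤ -(κ * ‖u t‖ ^ 2)) {t : ℝ} (ht : 0 ≤ t) :
    ‖u t‖ ≤ √(c₂ / c₁) * Real.exp (-(κ / c₂ * t)) * ‖u 0‖ := by
  have hderiv (t : ℝ) (ht : 0 ≤ t) : HasDerivWithinAt (fun τ => ⟪P (u τ), u τ⟫_ℝ)
      (2 * ⟪P (u' t), u t⟫_ℝ) (Set.Ici 0) t := by
    have hsymm : ⟪P (u t), u' t⟫_ℝ = ⟪P (u' t), u t⟫_ℝ := by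
      rw [real_inner_comm]
      exact (hP (u' t) (u t)).symm
    exact ((P.hasFDerivAt.comp_hasDerivWithinAt t (hu t ht)).inner ℝ (hu t ht)).congr_deriv
      (by rw [Function.comp_apply, hsymm, two_mul])
  have hdecay := le_mul_exp_of_hasDerivWithinAt_le (κ := -(2 * (κ / c₂))) hderiv
    (fun τ hτ => by
      have := mul_le_mul_of_nonneg_left (hupper (u τ)) (div_nonneg hκ hc₂.le)
      rw [← mul_assoc, div_mul_cancel₀ _ hc₂.ne'] at this
      linarith [hdiss τ hτ]) ht
  have hexp : Real.exp (-(2 * (κ / c₂)) * t) = Real.exp (-(κ / c₂ * t)) ^ 2 := by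
    rw [← Real.exp_nat_mul]
    push_cast
    ring_nf
  rw [hexp] at hdecay
  refine le_of_sq_le_sq ?_ (by positivity)
  rw [mul_pow, mul_pow, Real.sq_sqrt (by positivity), div_mul_eq_mul_div, div_mul_eq_mul_div,
    le_div_iff₀' hc₁]
  calc c₁ * ‖u t‖ ^ 2 ≤ ⟪P (u 0), u 0⟫_ℝ * Real.exp (-(κ / c₂ * t)) ^ 2 :=
        (hlower (u t)).trans hdecay
    _ ≤ c₂ * ‖u 0‖ ^ 2 * Real.exp (-(κ / c₂ * t)) ^ 2 := by gcongr; exact hupper (u 0)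
    _ = c₂ * Real.exp (-(κ / c₂ * t)) ^ 2 * ‖u 0‖ ^ 2 := by ring

variable {W : Type*} [TopologicalSpace W]

/-- Conditions (A), (S), (S)₁ and (K) for the systems `a u' + r b(ω) u + l u = 0` in a real inner
product space: `a = A⁰`, `b(ω) = iA(ω)`, `l = L`, `s = S` and `k(ω) = -iK(ω)`. Kernels of symmetric
parts are written as zero sets of quadratic forms. -/
structure IsCompensatedSystem (a l s : E →L[ℝ] E) (b k : W → E →L[ℝ] E) : Prop where
  continuous_b : Continuous b
  continuous_k : Continuous k
  isSymmetric_a : (a : E →ₗ[ℝ] E).IsSymmetric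
  a_pos : ∀ x, x ≠ 0 → 0 < ⟪a x, x⟫_ℝ
  b_skew : ∀ ω x, ⟪b ω x, x⟫_ℝ = 0
  l_nonneg : ∀ x, 0 ≤ ⟪l x, x⟫_ℝ
  isSymmetric_s_mul_a : ((s * a : E →L[ℝ] E) : E →ₗ[ℝ] E).IsSymmetric
  s_mul_l_add_l_nonneg : ∀ x, 0 ≤ ⟪(s * l + l) x, x⟫_ℝ
  s_mul_l_add_l_zero : ∀ x, ⟪(s * l + l) x, x⟫_ℝ = 0 → l x = 0
  s_mul_b_nonneg : ∀ ω x, ⟪l x, x⟫_ℝ = 0 → 0 ≤ ⟪(s * b ω) x, x⟫_ℝ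
  isSymmetric_k_mul_a : ∀ ω, ((k ω * a : E →L[ℝ] E) : E →ₗ[ℝ] E).IsSymmetric
  k_mul_b_pos : ∀ ω x, l x = 0 → x ≠ 0 → 0 < ⟪(k ω * b ω) x, x⟫_ℝ

namespace IsCompensatedSystem

variable [FiniteDimensional ℝ E] [CompactSpace W] {a l s : E →L[ℝ] E} {b k : W → E →L[ℝ] E}

lemma exists_dissipation (h : IsCompensatedSystem a l s b k) {ε : ℝ} (hε : 0 < ε) :
    ∃ α ≥ 0, ∃ δ ≥ 0, ∃ κ > 0, α ≤ ε ∧ δ ≤ ε ∧ ∀ r, 0 ≤ r → ∀ ω x,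
      κ * (r ^ 2 / (1 + r ^ 2) ^ 2) * ‖x‖ ^ 2 ≤
        ⟪lyapunovMultiplier s (k ω) α δ r (r • b ω x + l x), x⟫_ℝ := by
  have hb := h.continuous_b
  have hk := h.continuous_k
  obtain ⟨Ms, hMs⟩ := exists_neg_mul_sqrt_mul_norm_le_inner (f := fun ω => s * b ω)
    (by fun_prop) h.l_nonneg h.s_mul_b_nonneg
  obtain ⟨Mk, hMk⟩ := exists_neg_mul_sqrt_mul_norm_le_inner (f := fun ω => k ω * l)
    (by fun_prop) h.s_mul_l_add_l_nonneg fun ω x hx => by simp [h.s_mul_l_add_l_zero x hx]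
  obtain ⟨c, hc, N, hN, hkb⟩ := exists_pos_mul_sq_norm_le_inner_add (f := fun ω => k ω * b ω)
    (by fun_prop) h.s_mul_l_add_l_nonneg
    fun ω x hx hx_zero => h.k_mul_b_pos ω x (h.s_mul_l_add_l_zero x hx_zero) hx
  obtain ⟨α, hα, δ, hδ, hα_le, hδ_le, hαδ, hδα⟩ :=
    exists_lyapunov_weights (ε := min (1 / 2) ε) hc (by positivity) hN Ms Mk
  refine ⟨α, hα.le, δ, hδ.le, δ * c / 2, by positivity, hα_le.trans (min_le_right _ _),
    hδ_le.trans (min_le_right _ _), fun r hr ω x => ?_⟩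
  rw [← div_pow]
  exact mul_sq_norm_le_inner_lyapunovMultiplier hr hα.le (hα_le.trans (min_le_left _ _)) hδ hc hN
    hαδ hδα (h.b_skew ω x) (h.l_nonneg x) (h.s_mul_l_add_l_nonneg x) (hMs ω x) (hMk ω x) (hkb ω x)

lemma exists_energy_equivalence (h : IsCompensatedSystem a l s b k) :
    ∃ c₁ > 0, ∃ c₂ > 0, ∃ ε > 0, ∀ α, 0 ≤ α → α ≤ ε → ∀ δ, 0 ≤ δ → δ ≤ ε →
      ∀ r, 0 ≤ r → ∀ ω x,
        c₁ * ‖x‖ ^ 2 ≤ ⟪(lyapunovMultiplier s (k ω) α δ r * a) x, x⟫_ℝ ∧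
          ⟪(lyapunovMultiplier s (k ω) α δ r * a) x, x⟫_ℝ ≤ c₂ * ‖x‖ ^ 2 := by
  have hk := h.continuous_k
  obtain ⟨c, hc, ha⟩ := exists_pos_mul_sq_norm_le_inner h.a_pos
  obtain ⟨B, hB⟩ := isCompact_univ.exists_bound_of_continuousOn
    (f := fun ω => k ω * a) (by fun_prop)
  set D := ‖s * a‖ + |B| + 1
  have hD : 0 < D := by positivity
  refine ⟨c / 2, by positivity, ‖a‖ + c / 2, by positivity, c / (2 * D), by positivity,
    fun α hα hα_le δ hδ hδ_le r hr ω x => ?_⟩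
  have hclose : |⟪(lyapunovMultiplier s (k ω) α δ r * a) x, x⟫_ℝ - ⟪a x, x⟫_ℝ| ≤
      c / 2 * ‖x‖ ^ 2 := by
    refine (abs_inner_lyapunovMultiplier_mul_sub_le a s (k ω) hα hδ hα_le hδ_le hr x).trans ?_
    gcongr
    calc c / (2 * D) * (‖s * a‖ + ‖k ω * a‖) ≤ c / (2 * D) * D := by
          gcongr
          linarith [hB ω (Set.mem_univ ω), le_abs_self B]
      _ = c / 2 := by field_simp
  obtain ⟨hlower, hupper⟩ := abs_le.1 hclose
  constructor <;> linarith [ha x, (le_abs_self _).trans (abs_inner_apply_self_le a x)]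

theorem exists_norm_le_mul_exp (h : IsCompensatedSystem a l s b k) :
    ∃ C > 0, ∃ c > 0, ∀ r, 0 ≤ r → ∀ (ω : W) (u u' : ℝ → E),
      (∀ t, 0 ≤ t → HasDerivWithinAt u (u' t) (Set.Ici 0) t) →
      (∀ t, 0 ≤ t → a (u' t) + r • b ω (u t) + l (u t) = 0) →
      ∀ t, 0 ≤ t → ‖u t‖ ≤ C * Real.exp (-(c * (r ^ 2 / (1 + r ^ 2) ^ 2) * t)) * ‖u 0‖ := by
  obtain ⟨c₁, hc₁, c₂, hc₂, ε, hε, henergy⟩ := h.exists_energy_equivalence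
  obtain ⟨α, hα, δ, hδ, κ, hκ, hα_le, hδ_le, hdiss⟩ := h.exists_dissipation hε
  refine ⟨√(c₂ / c₁), by positivity, κ / c₂, by positivity, fun r hr ω u u' hu hode t ht => ?_⟩
  have hequiv := henergy α hα hα_le δ hδ hδ_le r hr ω
  have hode' (t : ℝ) (ht : 0 ≤ t) : a (u' t) = -(r • b ω (u t) + l (u t)) := by
    rw [eq_neg_iff_add_eq_zero, ← add_assoc, hode t ht]
  rw [div_mul_eq_mul_div κ]
  refine norm_le_sqrt_mul_exp_of_isSymmetric
    (isSymmetric_lyapunovMultiplier_mul h.isSymmetric_a h.isSymmetric_s_mul_a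
      (h.isSymmetric_k_mul_a ω) α δ r)
    hc₁ hc₂ (by positivity) (fun x => (hequiv x).1) (fun x => (hequiv x).2) hu (fun τ hτ => ?_) ht
  rw [mul_apply_eq_comp, hode' τ hτ, map_neg, inner_neg_left]
  exact neg_le_neg (hdiss r hr ω (u τ))

end IsCompensatedSystem

end Decay

section MatrixOperators

variable {m : ℕ}

/-- The operator `z ↦ X z` on `ℂᵐ`, regarded as a real inner product space with inner product
`Re ⟨x, y⟩`. -/
def matrixOp : Matrix (Fin m) (Fin m) ℂ →ₐ[ℝ]
    (EuclideanSpace ℂ (Fin m) →L[ℝ] EuclideanSpace ℂ (Fin m)) where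
  toFun X := (toEuclideanCLM (𝕜 := ℂ) X).restrictScalars ℝ
  map_one' := by ext; simp
  map_mul' X Y := by ext; simp
  map_zero' := by ext; simp
  map_add' X Y := by ext; simp
  commutes' c := by ext; simp [Algebra.algebraMap_eq_smul_one, smul_mulVec]

@[simp]
lemma ofLp_matrixOp (X : Matrix (Fin m) (Fin m) ℂ) (x : EuclideanSpace ℂ (Fin m)) :
    (matrixOp X x).ofLp = X *ᵥ x.ofLp := by
  simp [matrixOp]

lemma continuous_matrixOp : Continuous (matrixOp (m := m)) :=
  LinearMap.continuous_of_finiteDimensional matrixOp.toLinearMap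

lemma real_inner_eq_reIP (x y : EuclideanSpace ℂ (Fin m)) : ⟪x, y⟫_ℝ = reIP x.ofLp y.ofLp := by
  rw [real_inner_comm]
  simp [reIP, PiLp.inner_apply, Complex.inner]

lemma norm_eq_cnrm (x : EuclideanSpace ℂ (Fin m)) : ‖x‖ = cnrm x.ofLp := by
  simp [cnrm, EuclideanSpace.norm_eq, Complex.normSq_eq_norm_sq]

lemma inner_matrixOp_left (X : Matrix (Fin m) (Fin m) ℂ) (x y : EuclideanSpace ℂ (Fin m)) :
    ⟪matrixOp X x, y⟫_ℝ = ⟪x, matrixOp Xᴴ y⟫_ℝ := by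
  have hre (z w : EuclideanSpace ℂ (Fin m)) : ⟪z, w⟫_ℝ = (⟪z, w⟫_ℂ).re := by
    simp [PiLp.inner_apply, Complex.inner, mul_comm]
  have hadj : toEuclideanCLM (𝕜 := ℂ) Xᴴ = (toEuclideanCLM (𝕜 := ℂ) X).adjoint :=
    map_star toEuclideanCLM X
  rw [hre, hre]
  change (⟪toEuclideanCLM (𝕜 := ℂ) X x, y⟫_ℂ).re = (⟪x, toEuclideanCLM (𝕜 := ℂ) Xᴴ y⟫_ℂ).re
  rw [hadj, ContinuousLinearMap.adjoint_inner_right]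

lemma isSymmetric_matrixOp {X : Matrix (Fin m) (Fin m) ℂ} (hX : X.IsHermitian) :
    (matrixOp X : EuclideanSpace ℂ (Fin m) →ₗ[ℝ] EuclideanSpace ℂ (Fin m)).IsSymmetric :=
  fun x y => by simpa [hX.eq] using inner_matrixOp_left X x y

lemma inner_matrixOp_hermitianPart (X : Matrix (Fin m) (Fin m) ℂ)
    (x : EuclideanSpace ℂ (Fin m)) :
    ⟪matrixOp ((2⁻¹ : ℝ) • (X + Xᴴ)) x, x⟫_ℝ = ⟪matrixOp X x, x⟫_ℝ := by
  have hadj : ⟪matrixOp Xᴴ x, x⟫_ℝ = ⟪matrixOp X x, x⟫_ℝ := by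
    rw [inner_matrixOp_left X, real_inner_comm]
  rw [map_smul, map_add, _root_.smul_apply, _root_.add_apply, real_inner_smul_left,
    inner_add_left, hadj, ← two_mul, inv_mul_cancel_left₀ two_ne_zero]

lemma cmap_mul (X Y : Matrix (Fin m) (Fin m) ℝ) : cmap (X * Y) = cmap X * cmap Y :=
  Matrix.map_mul (f := Complex.ofRealHom)

lemma cmap_add (X Y : Matrix (Fin m) (Fin m) ℝ) : cmap (X + Y) = cmap X + cmap Y :=
  Matrix.map_add _ Complex.ofReal_add X Y

lemma conjTranspose_cmap (X : Matrix (Fin m) (Fin m) ℝ) : (cmap X)ᴴ = cmap Xᵀ := by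
  ext i j
  simp [cmap]

lemma cmap_symP (X : Matrix (Fin m) (Fin m) ℝ) :
    cmap (symP X) = (2⁻¹ : ℝ) • (cmap X + (cmap X)ᴴ) := by
  ext i j
  simp [cmap, symP]

lemma I_smul_cmap_skewP (X : Matrix (Fin m) (Fin m) ℝ) :
    Complex.I • cmap (skewP X) =
      (2⁻¹ : ℝ) • (Complex.I • cmap X + (Complex.I • cmap X)ᴴ) := by
  ext i j
  simp [cmap, skewP]
  ring

lemma isHermitian_cmap {X : Matrix (Fin m) (Fin m) ℝ} (hX : Xᵀ = X) : (cmap X).IsHermitian := by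
  rw [IsHermitian, conjTranspose_cmap, hX]

lemma isHermitian_neg_I_smul_cmap {X : Matrix (Fin m) (Fin m) ℝ} (hX : Xᵀ = -X) :
    (-Complex.I • cmap X).IsHermitian := by
  rw [IsHermitian, conjTranspose_smul, conjTranspose_cmap, hX]
  ext i j
  simp [cmap]

lemma inner_matrixOp_I_smul_cmap_eq_zero {X : Matrix (Fin m) (Fin m) ℝ} (hX : Xᵀ = X)
    (x : EuclideanSpace ℂ (Fin m)) : ⟪matrixOp (Complex.I • cmap X) x, x⟫_ℝ = 0 := by
  rw [← inner_matrixOp_hermitianPart, ← I_smul_cmap_skewP, skewP, hX]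
  simp [cmap]

lemma transpose_symP (X : Matrix (Fin m) (Fin m) ℝ) : (symP X)ᵀ = symP X := by
  simp [symP, add_comm]

lemma reIP_cmap_symP (X : Matrix (Fin m) (Fin m) ℝ) (z : Fin m → ℂ) :
    reIP (cmap (symP X) *ᵥ z) z = reIP (cmap X *ᵥ z) z := by
  have h := inner_matrixOp_hermitianPart (cmap X) (WithLp.toLp 2 z)
  rwa [← cmap_symP, real_inner_eq_reIP, real_inner_eq_reIP, ofLp_matrixOp, ofLp_matrixOp] at h

lemma matrixOp_cmap_eq_zero_iff {X : Matrix (Fin m) (Fin m) ℝ} {x : EuclideanSpace ℂ (Fin m)} :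
    matrixOp (cmap X) x = 0 ↔ x.ofLp ∈ kerC X := by
  rw [← (WithLp.ofLp_injective 2).eq_iff, ofLp_matrixOp]
  rfl

lemma mem_kerC_of_inner_matrixOp_eq_zero {X : Matrix (Fin m) (Fin m) ℝ} (hX : Xᵀ = X)
    (hX_nonneg : ∀ z : Fin m → ℂ, 0 ≤ reIP (cmap X *ᵥ z) z) {x : EuclideanSpace ℂ (Fin m)}
    (hx : ⟪matrixOp (cmap X) x, x⟫_ℝ = 0) : x.ofLp ∈ kerC X := by
  have hpos : (matrixOp (cmap X)).IsPositive := by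
    refine ⟨isSymmetric_matrixOp (isHermitian_cmap hX), fun y => ?_⟩
    exact (hX_nonneg y.ofLp).trans_eq (by rw [← ofLp_matrixOp, ← real_inner_eq_reIP]; rfl)
  exact matrixOp_cmap_eq_zero_iff.1 ((inner_apply_self_eq_zero_iff_of_isPositive hpos).1 hx)

lemma inner_matrixOp_symP_mul_add_symP (S L : Matrix (Fin m) (Fin m) ℝ)
    (x : EuclideanSpace ℂ (Fin m)) :
    ⟪matrixOp (cmap (symP (S * L) + symP L)) x, x⟫_ℝ =
      ⟪(matrixOp (cmap S) * matrixOp (cmap L) + matrixOp (cmap L)) x, x⟫_ℝ := by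
  rw [← map_mul, ← cmap_mul, cmap_add, map_add, _root_.add_apply, _root_.add_apply,
    inner_add_left, inner_add_left]
  simp only [cmap_symP, inner_matrixOp_hermitianPart]

variable {W : Type*} [TopologicalSpace W]

lemma isCompensatedSystem_matrixOp
    {A0 L S : Matrix (Fin m) (Fin m) ℝ} {A K : W → Matrix (Fin m) (Fin m) ℝ}
    (hA : Continuous A) (hK : Continuous K)
    (hA0_symm : A0ᵀ = A0) (hA_symm : ∀ ω, (A ω)ᵀ = A ω)
    (hA0_pos : ∀ z : Fin m → ℂ, z ≠ 0 → 0 < reIP (cmap A0 *ᵥ z) z)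
    (hL : ∀ z : Fin m → ℂ, 0 ≤ reIP (cmap L *ᵥ z) z)
    (hSA0 : (S * A0)ᵀ = S * A0)
    (hSL : ∀ z : Fin m → ℂ, 0 ≤ reIP (cmap (symP (S * L) + symP L) *ᵥ z) z)
    (hSL_ker : kerC (symP (S * L) + symP L) ⊆ kerC L)
    (hSA : ∀ ω, ∀ z ∈ kerC (symP L), 0 ≤ reIP ((Complex.I • cmap (skewP (S * A ω))) *ᵥ z) z)
    (hKA0 : ∀ ω, (K ω * A0)ᵀ = -(K ω * A0))
    (hKA : ∀ ω, ∀ z ∈ kerC L, z ≠ 0 → 0 < reIP (cmap (symP (K ω * A ω)) *ᵥ z) z) :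
    IsCompensatedSystem (matrixOp (cmap A0)) (matrixOp (cmap L)) (matrixOp (cmap S))
      (fun ω => matrixOp (Complex.I • cmap (A ω)))
      (fun ω => matrixOp (-Complex.I • cmap (K ω))) where
  continuous_b := continuous_matrixOp.comp (by unfold cmap; fun_prop)
  continuous_k := continuous_matrixOp.comp (by unfold cmap; fun_prop)
  isSymmetric_a := isSymmetric_matrixOp (isHermitian_cmap hA0_symm)
  a_pos x hx := by simpa [real_inner_eq_reIP] using hA0_pos x.ofLp (by simpa using hx)
  b_skew ω := inner_matrixOp_I_smul_cmap_eq_zero (hA_symm ω)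
  l_nonneg x := by simpa [real_inner_eq_reIP] using hL x.ofLp
  isSymmetric_s_mul_a := by
    rw [← map_mul, ← cmap_mul]
    exact isSymmetric_matrixOp (isHermitian_cmap hSA0)
  s_mul_l_add_l_nonneg x := by
    rw [← inner_matrixOp_symP_mul_add_symP, real_inner_eq_reIP, ofLp_matrixOp]
    exact hSL x.ofLp
  s_mul_l_add_l_zero x hx := by
    rw [← inner_matrixOp_symP_mul_add_symP] at hx
    refine matrixOp_cmap_eq_zero_iff.2 (hSL_ker (mem_kerC_of_inner_matrixOp_eq_zero ?_ hSL hx))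
    rw [transpose_add, transpose_symP, transpose_symP]
  s_mul_b_nonneg ω x hx := by
    have hx_ker : x.ofLp ∈ kerC (symP L) := by
      refine mem_kerC_of_inner_matrixOp_eq_zero (transpose_symP L) (fun z => ?_) ?_
      · exact (hL z).trans_eq (reIP_cmap_symP L z).symm
      · rw [cmap_symP, inner_matrixOp_hermitianPart, hx]
    rw [← map_mul, mul_smul_comm, ← cmap_mul, ← inner_matrixOp_hermitianPart,
      ← I_smul_cmap_skewP, real_inner_eq_reIP, ofLp_matrixOp]
    exact hSA ω _ hx_ker
  isSymmetric_k_mul_a ω := by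
    rw [← map_mul, smul_mul_assoc, ← cmap_mul]
    exact isSymmetric_matrixOp (isHermitian_neg_I_smul_cmap (hKA0 ω))
  k_mul_b_pos ω x hx hx_ne := by
    have hKA_mul : -Complex.I • cmap (K ω) * Complex.I • cmap (A ω) = cmap (K ω * A ω) := by
      simp [cmap_mul, smul_smul]
    rw [← map_mul, hKA_mul, real_inner_eq_reIP, ofLp_matrixOp, ← reIP_cmap_symP]
    exact hKA ω _ (matrixOp_cmap_eq_zero_iff.1 hx) (by simpa using hx_ne)

end MatrixOperators

lemma isCompact_setOf_sum_sq_eq_one {ι : Type*} [Fintype ι] :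
    IsCompact {ω : ι → ℝ | ∑ j, ω j ^ 2 = 1} := by
  convert (PiLp.homeomorph 2 fun _ : ι => ℝ).symm.isCompact_preimage.2
    (isCompact_sphere (0 : EuclideanSpace ℝ ι) 1) using 1
  ext ω
  simp [PiLp.homeomorph, EuclideanSpace.norm_eq]

theorem decay_regularity_loss_pointwise_general
    {m : ℕ} {W : Type*} [TopologicalSpace W] {Ω : Set W} (hΩ : IsCompact Ω)
    {A0 L S : Matrix (Fin m) (Fin m) ℝ} {A K : W → Matrix (Fin m) (Fin m) ℝ}
    (hA : ContinuousOn A Ω) (hK : ContinuousOn K Ω)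
    (hA0_symm : A0ᵀ = A0) (hA_symm : ∀ ω ∈ Ω, (A ω)ᵀ = A ω)
    (hA0_pos : ∀ z : Fin m → ℂ, z ≠ 0 → 0 < reIP (cmap A0 *ᵥ z) z)
    (hL : ∀ z : Fin m → ℂ, 0 ≤ reIP (cmap L *ᵥ z) z)
    (hSA0 : (S * A0)ᵀ = S * A0)
    (hSL : ∀ z : Fin m → ℂ, 0 ≤ reIP (cmap (symP (S * L) + symP L) *ᵥ z) z)
    (hSL_ker : kerC (symP (S * L) + symP L) ⊆ kerC L)
    (hSA : ∀ ω ∈ Ω, ∀ z ∈ kerC (symP L), 0 ≤ reIP ((Complex.I • cmap (skewP (S * A ω))) *ᵥ z) z)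
    (hKA0 : ∀ ω ∈ Ω, (K ω * A0)ᵀ = -(K ω * A0))
    (hKA : ∀ ω ∈ Ω, ∀ z ∈ kerC L, z ≠ 0 → 0 < reIP (cmap (symP (K ω * A ω)) *ᵥ z) z) :
    ∃ C > (0 : ℝ), ∃ c > (0 : ℝ), ∀ r : ℝ, 0 ≤ r → ∀ ω ∈ Ω, ∀ u u' : ℝ → Fin m → ℂ,
      (∀ t : ℝ, 0 ≤ t → HasDerivWithinAt u (u' t) (Set.Ici 0) t) →
      (∀ t : ℝ, 0 ≤ t →
        cmap A0 *ᵥ u' t + ((r : ℂ) * Complex.I) • cmap (A ω) *ᵥ u t + cmap L *ᵥ u t = 0) →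
      ∀ t : ℝ, 0 ≤ t →
        cnrm (u t) ≤ C * Real.exp (-(c * (r ^ 2 / (1 + r ^ 2) ^ 2) * t)) * cnrm (u 0) := by
  have : CompactSpace Ω := isCompact_iff_compactSpace.1 hΩ
  have hsystem := isCompensatedSystem_matrixOp (W := Ω) (A := fun ω => A ω) (K := fun ω => K ω)
    hA.domRestrict hK.domRestrict hA0_symm (fun ω => hA_symm ω ω.2) hA0_pos hL hSA0 hSL hSL_ker
    (fun ω => hSA ω ω.2) (fun ω => hKA0 ω ω.2) (fun ω => hKA ω ω.2)
  obtain ⟨C, hC, c, hc, hdecay⟩ := hsystem.exists_norm_le_mul_exp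
  refine ⟨C, hC, c, hc, fun r hr ω hω u u' hu hode t ht => ?_⟩
  have hu_toLp (t : ℝ) (ht : 0 ≤ t) :
      HasDerivWithinAt (fun t => WithLp.toLp 2 (u t)) (WithLp.toLp 2 (u' t)) (Set.Ici 0) t :=
    (PiLp.continuousLinearEquiv 2 ℝ
      (fun _ : Fin m => ℂ)).symm.hasFDerivAt.comp_hasDerivWithinAt t (hu t ht)
  have hode_toLp (t : ℝ) (ht : 0 ≤ t) :
      matrixOp (cmap A0) (WithLp.toLp 2 (u' t)) +
        r • matrixOp (Complex.I • cmap (A ω)) (WithLp.toLp 2 (u t)) +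
        matrixOp (cmap L) (WithLp.toLp 2 (u t)) = 0 :=
    WithLp.ofLp_injective 2 (by simpa [smul_mulVec, mul_smul] using hode t ht)
  simpa only [norm_eq_cnrm] using hdecay r hr ⟨ω, hω⟩ _ _ hu_toLp hode_toLp t ht

/-- **Theorem 2.1 (decay property of the regularity-loss type, pointwise estimate).**
Under conditions (A), (S), (S)₁ and (K), solutions of `A⁰û′ + i r A(ω) û + L û = 0` satisfy
`|û(t)| ≤ C e^{−c η(r) t} |û(0)|` with `η(r) = r²/(1+r²)²`. -/
theorem decay_regularity_loss_pointwise
    (m n : ℕ) (hm : 1 ≤ m) (hn : 1 ≤ n)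
    (A0 : Matrix (Fin m) (Fin m) ℝ) (A : Fin n → Matrix (Fin m) (Fin m) ℝ)
    (L : Matrix (Fin m) (Fin m) ℝ)
    -- condition (A)
    (hA0sym : A0ᵀ = A0) (hAsym : ∀ j, (A j)ᵀ = A j)
    (hA0pos : ∀ z : Fin m → ℂ, z ≠ 0 → 0 < reIP ((cmap A0).mulVec z) z)
    (hLnn : ∀ z : Fin m → ℂ, 0 ≤ reIP ((cmap L).mulVec z) z)
    (hLker : ∃ z : Fin m → ℂ, z ≠ 0 ∧ z ∈ kerC L)
    -- condition (S)
    (S : Matrix (Fin m) (Fin m) ℝ)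
    (hSA0 : (S * A0)ᵀ = S * A0)
    (hSLnn : ∀ z : Fin m → ℂ, 0 ≤ reIP ((cmap (symP (S * L) + symP L)).mulVec z) z)
    (hSLker : kerC (symP (S * L) + symP L) = kerC L)
    -- condition (S)₁ : `i(SA(ω))₂ ≥ 0` on `Ker(L₁)`
    (hS1 : ∀ ω : Fin n → ℝ, (∑ j, ω j ^ 2 = 1) → ∀ z ∈ kerC (symP L),
      0 ≤ reIP ((Complex.I • cmap (skewP (S * (∑ j, ω j • A j)))).mulVec z) z)
    -- condition (K): a smooth compensating matrix family
    (K : (Fin n → ℝ) → Matrix (Fin m) (Fin m) ℝ)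
    (hKsmooth : ∀ i j, ContDiff ℝ (⊤ : ℕ∞) (fun ω => K ω i j))
    (hKodd : ∀ ω : Fin n → ℝ, (∑ j, ω j ^ 2 = 1) → K (-ω) = - K ω)
    (hKA0 : ∀ ω : Fin n → ℝ, (∑ j, ω j ^ 2 = 1) → (K ω * A0)ᵀ = -(K ω * A0))
    (hKpos : ∀ ω : Fin n → ℝ, (∑ j, ω j ^ 2 = 1) → ∀ z ∈ kerC L, z ≠ 0 →
      0 < reIP ((cmap (symP (K ω * (∑ j, ω j • A j)))).mulVec z) z) :
    ∃ C > (0:ℝ), ∃ c > (0:ℝ), ∀ r : ℝ, 0 ≤ r → ∀ ω : Fin n → ℝ, (∑ j, ω j ^ 2 = 1) →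
      ∀ u u' : ℝ → (Fin m → ℂ),
      (∀ t : ℝ, 0 ≤ t → HasDerivWithinAt u (u' t) (Set.Ici 0) t) →
      (∀ t : ℝ, 0 ≤ t →
        (cmap A0).mulVec (u' t)
          + ((r : ℂ) * Complex.I) • (cmap (∑ j, ω j • A j)).mulVec (u t)
          + (cmap L).mulVec (u t) = 0) →
      ∀ t : ℝ, 0 ≤ t →
        cnrm (u t) ≤ C * Real.exp (-(c * (r ^ 2 / (1 + r ^ 2) ^ 2) * t)) * cnrm (u 0) :=
  decay_regularity_loss_pointwise_general isCompact_setOf_sum_sq_eq_one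
    (continuous_finsetSum _ fun j _ => (continuous_apply j).smul continuous_const).continuousOn
    (continuous_matrix fun i j => (hKsmooth i j).continuous).continuousOn hA0sym
    (fun ω _ => by simp [transpose_sum, hAsym]) hA0pos hLnn hSA0 hSLnn hSLker.subset hS1 hKA0 hKpos
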